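/- For every τ in the upper half-plane H₁ and every z ∈ ℂ, the square of the odd Jacobi theta function admits the theta decomposition θ(τ,z)² = θ₂(2τ)·θ₃(2τ,2z) − θ₃(2τ)·θ₂(2τ,2z); equivalently, θ(τ,z)²/η(τ)⁶ = h̃₀(τ)·θ₃(2τ,2z) + h̃₁(τ)·θ₂(2τ,2z) with h̃₀(τ) = θ₂(2τ)/η(τ)⁶ and h̃₁(τ) = −θ₃(2τ)/η(τ)⁶. -/

import Mathlib

/-!
STATEMENT 2: Theta decomposition of the square of the odd Jacobi theta function:
θ(τ,z)² = θ₂(2τ)·θ₃(2τ,2z) − θ₃(2τ)·θ₂(2τ,2z), equivalently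
θ(τ,z)²/η(τ)⁶ = h̃₀(τ)·θ₃(2τ,2z) + h̃₁(τ)·θ₂(2τ,2z)
with h̃₀ = θ₂(2τ)/η⁶ and h̃₁ = −θ₃(2τ)/η⁶.
-/

noncomputable section
open Complex Real

namespace KZ

/-- Jacobi theta function θ₂(τ,z) = Σ_{n∈ℤ} e^{iπ(n+1/2)²τ + 2πi(n+1/2)z}. -/
def theta2 (τ z : ℂ) : ℂ :=
  ∑' n : ℤ, Complex.exp (π * I * (n + 1/2)^2 * τ + 2 * π * I * (n + 1/2) * z)

/-- Jacobi theta function θ₃(τ,z) = Σ_{n∈ℤ} e^{iπn²τ + 2πinz}. -/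
def theta3 (τ z : ℂ) : ℂ :=
  ∑' n : ℤ, Complex.exp (π * I * (n:ℂ)^2 * τ + 2 * π * I * n * z)

/-- The odd Jacobi theta function θ(τ,z) = Σ_{n∈ℤ} e^{iπ(n+1/2)²τ + 2πi(n+1/2)(z+1/2)}. -/
def thetaOdd (τ z : ℂ) : ℂ :=
  ∑' n : ℤ, Complex.exp (π * I * (n + 1/2)^2 * τ + 2 * π * I * (n + 1/2) * (z + 1/2))

/-- Dedekind eta function η(τ) = e^{iπτ/12} ∏_{n≥1} (1 − e^{2πinτ}). -/
def eta (τ : ℂ) : ℂ :=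
  Complex.exp (π * I * τ / 12) * ∏' n : ℕ, (1 - Complex.exp (2 * π * I * (n + 1) * τ))

/-- h̃₀(τ) = θ₂(2τ)/η(τ)⁶. -/
def htilde0 (τ : ℂ) : ℂ := theta2 (2*τ) 0 / (eta τ)^6

/-- h̃₁(τ) = −θ₃(2τ)/η(τ)⁶. -/
def htilde1 (τ : ℂ) : ℂ := - theta3 (2*τ) 0 / (eta τ)^6

/-!
For `n = k + l` and `m = k - l - c` one has `n + a = r + s` and `m + b = r - s`, where
`r = k + (a + b - c) / 2` and `s = l + (a - b + c) / 2`. By the parallelogram law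
`(r + s)² + (r - s)² = 2r² + 2s²`, the terms of a product of two theta series at `τ` thus
become terms of a product of two theta series at `2τ`. Splitting `ℤ × ℤ` by the parity of `n + m`,
that is into `c = 0` and `c = 1`, gives the addition formula; the decomposition is the case of equal
arguments `z + 1/2` and characteristics `a = b = 1/2`.
-/

section ParitySplitting

/-- The parametrization `(k, l) ↦ (k + l, k - l - c)` of the pairs of integers whose sum has the
parity of `c`. -/
def sumDiff (c : ℤ) (p : ℤ × ℤ) : ℤ × ℤ := (p.1 + p.2, p.1 - p.2 - c)

lemma sumDiff_injective (c : ℤ) : Function.Injective (sumDiff c) := by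
  rintro ⟨k, l⟩ ⟨k', l'⟩ h
  simp only [sumDiff, Prod.mk.injEq] at h ⊢
  omega

lemma mem_range_sumDiff {c : ℤ} {p : ℤ × ℤ} :
    p ∈ Set.range (sumDiff c) ↔ Even (p.1 + p.2 + c) := by
  obtain ⟨n, m⟩ := p
  constructor
  · rintro ⟨⟨k, l⟩, h⟩
    simp only [sumDiff, Prod.mk.injEq] at h
    exact ⟨k, by omega⟩
  · rintro ⟨k, hk⟩
    refine ⟨(k, n - k), ?_⟩
    simp only [sumDiff, Prod.mk.injEq]
    omega

lemma isCompl_range_sumDiff (c : ℤ) :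
    IsCompl (Set.range (sumDiff c)) (Set.range (sumDiff (c + 1))) := by
  rw [← compl_eq_iff_isCompl]
  ext p
  rw [Set.mem_compl_iff, mem_range_sumDiff, mem_range_sumDiff, ← add_assoc, Int.even_add_one]

lemma hasSum_of_comp_sumDiff {M : Type*} [AddCommMonoid M] [TopologicalSpace M] [ContinuousAdd M]
    {f : ℤ × ℤ → M} {s t : M} {c : ℤ} (hs : HasSum (f ∘ sumDiff c) s)
    (ht : HasSum (f ∘ sumDiff (c + 1)) t) : HasSum f (s + t) :=
  ((sumDiff_injective c).hasSum_range_iff.2 hs).add_isCompl (isCompl_range_sumDiff c)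
    ((sumDiff_injective (c + 1)).hasSum_range_iff.2 ht)

end ParitySplitting

section ThetaCharacteristic

/-- The general term `e^{iπr²τ + 2πirz}` of a theta series, with `r` ranging over a translate
of `ℤ`. -/
def thetaTerm (τ z r : ℂ) : ℂ :=
  Complex.exp (π * I * r ^ 2 * τ + 2 * π * I * r * z)

/-- The theta function `Σ_{n∈ℤ} e^{iπ(n+a)²τ + 2πi(n+a)z}` with upper characteristic `a`; it
interpolates `θ₃` (`a = 0`) and `θ₂` (`a = 1/2`). The lower characteristic is absorbed by
translating `z`. -/
def thetaChar (a τ z : ℂ) : ℂ := ∑' n : ℤ, thetaTerm τ z (n + a)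

lemma theta2_eq_thetaChar (τ z : ℂ) : theta2 τ z = thetaChar (1 / 2) τ z := rfl

lemma theta3_eq_thetaChar (τ z : ℂ) : theta3 τ z = thetaChar 0 τ z := by
  simp only [theta3, thetaChar, thetaTerm, add_zero]

lemma thetaOdd_eq_theta2 (τ z : ℂ) : thetaOdd τ z = theta2 τ (z + 1 / 2) := rfl

lemma thetaTerm_add_mul_thetaTerm_sub (τ x y r s : ℂ) :
    thetaTerm τ x (r + s) * thetaTerm τ y (r - s) =
      thetaTerm (2 * τ) (x + y) r * thetaTerm (2 * τ) (x - y) s := by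
  simp only [thetaTerm, ← Complex.exp_add]
  ring_nf

lemma thetaTerm_intCast_add (a τ z : ℂ) (n : ℤ) :
    thetaTerm τ z (n + a) = thetaTerm τ z a * jacobiTheta₂_term n (z + a * τ) τ := by
  simp only [thetaTerm, jacobiTheta₂_term, ← Complex.exp_add]
  ring_nf

lemma thetaTerm_add_one (a τ z : ℂ) (n : ℤ) :
    thetaTerm τ (z + 1) (n + a) = Complex.exp (2 * π * I * a) * thetaTerm τ z (n + a) := by
  rw [thetaTerm, thetaTerm, ← Complex.exp_add, Complex.exp_eq_exp_iff_exists_int]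
  exact ⟨n, by ring⟩

lemma thetaChar_add_one (a τ z : ℂ) :
    thetaChar a τ (z + 1) = Complex.exp (2 * π * I * a) * thetaChar a τ z := by
  simp only [thetaChar, thetaTerm_add_one, tsum_mul_left]

lemma theta3_add_one (τ z : ℂ) : theta3 τ (z + 1) = theta3 τ z := by
  simp only [theta3_eq_thetaChar, thetaChar_add_one, mul_zero, Complex.exp_zero, one_mul]

lemma theta2_add_one (τ z : ℂ) : theta2 τ (z + 1) = -theta2 τ z := by
  have half_period : 2 * π * I * (1 / 2) = π * I := by ring
  rw [theta2_eq_thetaChar, thetaChar_add_one, half_period, Complex.exp_pi_mul_I, neg_one_mul,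
    theta2_eq_thetaChar]

variable {τ : ℂ}

lemma summable_thetaTerm (hτ : 0 < τ.im) (a z : ℂ) :
    Summable fun n : ℤ => thetaTerm τ z (n + a) := by
  simp only [thetaTerm_intCast_add]
  exact ((summable_jacobiTheta₂_term_iff _ τ).2 hτ).mul_left _

lemma hasSum_thetaTerm_mul_thetaTerm (hτ : 0 < τ.im) (a b x y : ℂ) :
    HasSum (fun p : ℤ × ℤ => thetaTerm τ x (p.1 + a) * thetaTerm τ y (p.2 + b))
      (thetaChar a τ x * thetaChar b τ y) := by
  have hx := (summable_thetaTerm hτ a x).norm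
  have hy := (summable_thetaTerm hτ b y).norm
  rw [thetaChar, thetaChar, tsum_mul_tsum_of_summable_norm hx hy]
  exact (summable_mul_of_summable_norm hx hy).hasSum

lemma hasSum_thetaTerm_mul_thetaTerm_comp_sumDiff (hτ : 0 < τ.im) (a b x y : ℂ) (c : ℤ) :
    HasSum ((fun p : ℤ × ℤ => thetaTerm τ x (p.1 + a) * thetaTerm τ y (p.2 + b)) ∘ sumDiff c)
      (thetaChar ((a + b - c) / 2) (2 * τ) (x + y) *
        thetaChar ((a - b + c) / 2) (2 * τ) (x - y)) := by
  have h2τ : 0 < (2 * τ).im := by simpa using hτ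
  convert hasSum_thetaTerm_mul_thetaTerm h2τ ((a + b - c) / 2) ((a - b + c) / 2) (x + y) (x - y)
    using 2 with p
  rw [← thetaTerm_add_mul_thetaTerm_sub]
  simp only [Function.comp_apply, sumDiff]
  push_cast
  congr 2 <;> ring

theorem thetaChar_mul_thetaChar (hτ : 0 < τ.im) (a b x y : ℂ) :
    thetaChar a τ x * thetaChar b τ y =
      thetaChar ((a + b) / 2) (2 * τ) (x + y) * thetaChar ((a - b) / 2) (2 * τ) (x - y) +
      thetaChar ((a + b - 1) / 2) (2 * τ) (x + y) *
        thetaChar ((a - b + 1) / 2) (2 * τ) (x - y) := by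
  have hsplit := hasSum_of_comp_sumDiff
    (hasSum_thetaTerm_mul_thetaTerm_comp_sumDiff hτ a b x y 0)
    (hasSum_thetaTerm_mul_thetaTerm_comp_sumDiff hτ a b x y (0 + 1))
  simpa using (hasSum_thetaTerm_mul_thetaTerm hτ a b x y).unique hsplit

theorem theta2_mul_theta2 (hτ : 0 < τ.im) (x y : ℂ) :
    theta2 τ x * theta2 τ y =
      theta2 (2 * τ) (x + y) * theta3 (2 * τ) (x - y) +
      theta3 (2 * τ) (x + y) * theta2 (2 * τ) (x - y) := by
  simp only [theta2_eq_thetaChar, theta3_eq_thetaChar, thetaChar_mul_thetaChar hτ]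
  norm_num

end ThetaCharacteristic

theorem thetaOdd_sq_decomposition (τ : ℂ) (hτ : 0 < τ.im) (z : ℂ) :
    (thetaOdd τ z)^2 = theta2 (2*τ) 0 * theta3 (2*τ) (2*z)
        - theta3 (2*τ) 0 * theta2 (2*τ) (2*z) ∧
    (thetaOdd τ z)^2 / (eta τ)^6
      = htilde0 τ * theta3 (2*τ) (2*z) + htilde1 τ * theta2 (2*τ) (2*z) := by
  have hsq : (thetaOdd τ z)^2 = theta2 (2*τ) 0 * theta3 (2*τ) (2*z)
      - theta3 (2*τ) 0 * theta2 (2*τ) (2*z) := by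
    have hadd : z + 1 / 2 + (z + 1 / 2) = 2 * z + 1 := by ring
    rw [thetaOdd_eq_theta2, sq, theta2_mul_theta2 hτ, hadd, sub_self, theta2_add_one,
      theta3_add_one]
    ring
  refine ⟨hsq, ?_⟩
  rw [hsq, htilde0, htilde1]
  ring

end KZ
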